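/- Let A₁,...,A_k be hermitian n×n complex matrices and let w(ρ) = (tr(ρA₁),...,tr(ρA_k)). For every nonempty face F of W = W(A₁,...,A_k) there exists a unique nonzero orthogonal projection P ∈ M_n(ℂ) (P = P* = P²) such that for every density matrix ρ (ρ positive semidefinite with tr ρ = 1): w(ρ) ∈ F if and only if PρP = ρ. -/

import Mathlib

open Matrix ComplexOrder

noncomputable section

/-- A density matrix: positive semidefinite with unit trace. -/
def IsDensity {n : Type*} [Fintype n] (ρ : Matrix n n ℂ) : Prop :=
  ρ.PosSemidef ∧ ρ.trace = 1

/-- The measurement map `ρ ↦ (tr ρA₁, …, tr ρA_k)` (the traces are real for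
hermitian matrices). -/
def wpt {n : Type*} [Fintype n] {k : ℕ} (A : Fin k → Matrix n n ℂ)
    (ρ : Matrix n n ℂ) : Fin k → ℝ :=
  fun i => ((ρ * A i).trace).re

/-- The joint numerical range of `k` matrices. -/
def JNR {n : Type*} [Fintype n] {k : ℕ} (A : Fin k → Matrix n n ℂ) :
    Set (Fin k → ℝ) :=
  wpt A '' {ρ | IsDensity ρ}

/-- `F` is a face of the convex set `C`: a convex subset such that whenever an
open segment between two points of `C` meets `F`, both endpoints lie in `F`. -/
def IsFaceOf {E : Type*} [AddCommGroup E] [Module ℝ E] (C F : Set E) : Prop :=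
  Convex ℝ F ∧ IsExtreme ℝ C F

/-- The dimension of a convex set: the dimension of its affine hull. -/
def convDim {E : Type*} [AddCommGroup E] [Module ℝ E] (F : Set E) : ℕ :=
  Module.finrank ℝ (affineSpan ℝ F).direction

/-- Euclidean dot product on `Fin d → ℝ`. -/
def dotR {d : ℕ} (u v : Fin d → ℝ) : ℝ := ∑ i, u i * v i

/-- `F` is an exposed face of `C`: the set of minimizers of a linear functional. -/
def IsExposedFace {d : ℕ} (C F : Set (Fin d → ℝ)) : Prop :=
  ∃ u : Fin d → ℝ, F = {x ∈ C | ∀ y ∈ C, dotR u x ≤ dotR u y}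

/-- The normal cone of `C` at `p`. -/
def normalConeAt {d : ℕ} (C : Set (Fin d → ℝ)) (p : Fin d → ℝ) :
    Set (Fin d → ℝ) :=
  {u | ∀ y ∈ C, 0 ≤ dotR (y - p) u}

/-- `p` is a corner point of `C` if the normal cone of `C` at `p` spans `ℝ^d`. -/
def IsCornerPoint {d : ℕ} (C : Set (Fin d → ℝ)) (p : Fin d → ℝ) : Prop :=
  p ∈ C ∧ Submodule.span ℝ (normalConeAt C p) = ⊤

/-- The closed unit disk of `ℝ²`. -/
def unitDisk2 : Set (Fin 2 → ℝ) := {v | v 0 ^ 2 + v 1 ^ 2 ≤ 1}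

/-- An elliptic disk in `ℝ³`: the image of the closed unit disk of `ℝ²` under an
injective affine map. -/
def IsEllipticDisk (F : Set (Fin 3 → ℝ)) : Prop :=
  ∃ f : (Fin 2 → ℝ) →ᵃ[ℝ] (Fin 3 → ℝ), Function.Injective f ∧ F = f '' unitDisk2

/-- A non-elliptic face of `W`: a two-dimensional face that is not an elliptic
disk. -/
def IsNonEllipticFace (W F : Set (Fin 3 → ℝ)) : Prop :=
  IsFaceOf W F ∧ convDim F = 2 ∧ ¬ IsEllipticDisk F

/-- A rank-3 face of the joint numerical range of `A`. -/
def IsRank3Face {k : ℕ} (A : Fin k → Matrix (Fin 4) (Fin 4) ℂ)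
    (F : Set (Fin k → ℝ)) : Prop :=
  F.Nonempty ∧ IsFaceOf (JNR A) F ∧
    ∃ P : Matrix (Fin 4) (Fin 4) ℂ, Pᴴ = P ∧ P * P = P ∧ P.rank = 3 ∧
      ∀ ρ : Matrix (Fin 4) (Fin 4) ℂ, IsDensity ρ → (wpt A ρ ∈ F ↔ P * ρ * P = ρ)

/-!
Pulling `F` back along the measurement map gives a face `G` of the convex set of density matrices,
so it is enough to understand the faces of that set. By convexity, `G` contains a density matrix
`ρ₀` whose kernel is contained in the kernel of every other member of `G`. Conversely, if `ρ` is a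
density matrix with `ker ρ₀ ≤ ker ρ`, then a positive multiple of `ρ` lies below `ρ₀`, so the
segment from `ρ` to `ρ₀` extends beyond `ρ₀` inside the set of density matrices, and extremality
puts `ρ` into `G`. Hence `G` consists of the density matrices whose range lies in the range of `ρ₀`,
and `P` is the projection onto that range. A nonzero projection `P` is determined by `G`, because
`P / tr P` is a density matrix.
-/

section Compression

variable {n 𝕜 : Type*} [Fintype n] [RCLike 𝕜] {B P : Matrix n n 𝕜}

lemma mul_eq_self_iff_ker_mulVecLin_le (hP : IsIdempotentElem P) :
    B * P = B ↔ LinearMap.ker P.mulVecLin ≤ LinearMap.ker B.mulVecLin := by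
  have hP' : IsIdempotentElem P.mulVecLin := by
    rw [IsIdempotentElem, Module.End.mul_eq_comp, ← mulVecLin_mul, hP.eq]
  classical
  rw [← LinearMap.IsIdempotentElem.comp_eq_left_iff hP', ← mulVecLin_mul, ← toLin'_apply',
    ← toLin'_apply', toLin'.injective.eq_iff]

lemma compression_eq_self_iff_mul_eq_self (hP : IsStarProjection P) (hB : B.IsHermitian) :
    P * B * P = B ↔ B * P = B := by
  constructor <;> intro h
  · rw [← h, mul_assoc, hP.isIdempotentElem.eq]
  · have hPB : P * B = B := by
      have hPh : Pᴴ = P := hP.isSelfAdjoint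
      simpa only [conjTranspose_mul, hB.eq, hPh] using congrArg conjTranspose h
    rw [hPB, h]

lemma compression_eq_self_iff_ker_mulVecLin_le (hP : IsStarProjection P) (hB : B.IsHermitian) :
    P * B * P = B ↔ LinearMap.ker P.mulVecLin ≤ LinearMap.ker B.mulVecLin :=
  (compression_eq_self_iff_mul_eq_self hP hB).trans
    (mul_eq_self_iff_ker_mulVecLin_le hP.isIdempotentElem)

end Compression

section PosSemidef

variable {n 𝕜 : Type*} [Fintype n] [RCLike 𝕜] {A B : Matrix n n 𝕜}

lemma ker_mulVecLin_add_of_posSemidef (hA : A.PosSemidef) (hB : B.PosSemidef) :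
    LinearMap.ker (A + B).mulVecLin = LinearMap.ker A.mulVecLin ⊓ LinearMap.ker B.mulVecLin := by
  ext v
  simp only [Submodule.mem_inf, LinearMap.mem_ker, mulVecLin_apply]
  rw [← (hA.add hB).dotProduct_mulVec_zero_iff, add_mulVec, dotProduct_add,
    add_eq_zero_iff_of_nonneg (hA.dotProduct_mulVec_nonneg v) (hB.dotProduct_mulVec_nonneg v),
    hA.dotProduct_mulVec_zero_iff, hB.dotProduct_mulVec_zero_iff]

lemma ker_mulVecLin_smul {c : ℝ} (hc : c ≠ 0) (A : Matrix n n 𝕜) :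
    LinearMap.ker (c • A).mulVecLin = LinearMap.ker A.mulVecLin := by
  ext v
  simp only [LinearMap.mem_ker, mulVecLin_apply, smul_mulVec, smul_eq_zero_iff_right hc]

lemma exists_mem_forall_ker_mulVecLin_le_of_convex {G : Set (Matrix n n 𝕜)} (hG : Convex ℝ G)
    (hpos : ∀ A ∈ G, A.PosSemidef) (hne : G.Nonempty) :
    ∃ A ∈ G, ∀ B ∈ G, LinearMap.ker A.mulVecLin ≤ LinearMap.ker B.mulVecLin := by
  obtain ⟨A, hA, hmin⟩ := exists_minimalFor_of_wellFoundedLT (· ∈ G)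
    (fun A ↦ LinearMap.ker A.mulVecLin) hne
  refine ⟨A, hA, fun B hB ↦ ?_⟩
  have hmid : (2⁻¹ : ℝ) • (A + B) ∈ G := by
    rw [smul_add]
    exact hG hA hB (by norm_num) (by norm_num) (by norm_num)
  have hker : LinearMap.ker ((2⁻¹ : ℝ) • (A + B)).mulVecLin =
      LinearMap.ker A.mulVecLin ⊓ LinearMap.ker B.mulVecLin := by
    rw [ker_mulVecLin_smul (by norm_num), ker_mulVecLin_add_of_posSemidef (hpos A hA) (hpos B hB)]
  have hle := hmin hmid (hker.trans_le inf_le_left)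
  exact (hle.trans_eq hker).trans inf_le_right

end PosSemidef

section Support

open scoped MatrixOrder

variable {n 𝕜 : Type*} [Fintype n] [DecidableEq n] [RCLike 𝕜] {A B : Matrix n n 𝕜}

/-- The support projection of a hermitian matrix, i.e. the orthogonal projection onto its range,
encoded through the continuous functional calculus (hence `0` if `A` is not hermitian). -/
def supportProj (A : Matrix n n 𝕜) : Matrix n n 𝕜 :=
  cfc (fun x : ℝ ↦ if x = 0 then 0 else 1) A

lemma continuousOn_real_spectrum (A : Matrix n n 𝕜) (f : ℝ → ℝ) :
    ContinuousOn f (spectrum ℝ A) :=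
  A.finite_real_spectrum.continuousOn f

lemma isStarProjection_supportProj (A : Matrix n n 𝕜) : IsStarProjection (supportProj A) where
  isIdempotentElem := by
    rw [IsIdempotentElem, supportProj, ← cfc_mul _ _ A (continuousOn_real_spectrum A _)
      (continuousOn_real_spectrum A _)]
    refine cfc_congr fun x _ ↦ ?_
    by_cases hx : x = 0 <;> simp [hx]
  isSelfAdjoint := cfc_predicate _ A

lemma mul_supportProj (hA : A.IsHermitian) : A * supportProj A = A := by
  have hA' : IsSelfAdjoint A := hA
  calc A * supportProj A = cfc (fun x : ℝ ↦ x * if x = 0 then 0 else 1) A := by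
        rw [cfc_mul _ _ A (continuousOn_real_spectrum A _) (continuousOn_real_spectrum A _),
          cfc_id' ℝ A, supportProj]
    _ = cfc (fun x : ℝ ↦ x) A := cfc_congr fun x _ ↦ by by_cases hx : x = 0 <;> simp [hx]
    _ = A := cfc_id' ℝ A

lemma cfc_inv_mul_eq_supportProj (hA : A.IsHermitian) :
    cfc (fun x : ℝ ↦ x⁻¹) A * A = supportProj A := by
  have hA' : IsSelfAdjoint A := hA
  nth_rw 2 [← cfc_id' ℝ A]
  rw [← cfc_mul _ _ A (continuousOn_real_spectrum A _) (continuousOn_real_spectrum A _),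
    supportProj]
  refine cfc_congr fun x _ ↦ ?_
  by_cases hx : x = 0 <;> simp [hx]

lemma ker_mulVecLin_supportProj (hA : A.IsHermitian) :
    LinearMap.ker (supportProj A).mulVecLin = LinearMap.ker A.mulVecLin := by
  refine le_antisymm ?_ ?_
  · rw [← mul_eq_self_iff_ker_mulVecLin_le (isStarProjection_supportProj A).isIdempotentElem]
    exact mul_supportProj hA
  · rw [← cfc_inv_mul_eq_supportProj hA, mulVecLin_mul]
    exact LinearMap.ker_le_ker_comp _ _

lemma supportProj_mul_mul_supportProj_eq_self_iff (hA : A.IsHermitian) (hB : B.IsHermitian) :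
    supportProj A * B * supportProj A = B ↔
      LinearMap.ker A.mulVecLin ≤ LinearMap.ker B.mulVecLin := by
  rw [compression_eq_self_iff_ker_mulVecLin_le (isStarProjection_supportProj A) hB,
    ker_mulVecLin_supportProj hA]

lemma exists_pos_smul_supportProj_le (hA : A.PosSemidef) :
    ∃ c : ℝ, 0 < c ∧ c • supportProj A ≤ A := by
  have hA' : IsSelfAdjoint A := hA.isHermitian
  have hev : ∀ᶠ c : ℝ in nhdsWithin 0 (Set.Ioi 0), ∀ x ∈ spectrum ℝ A, x ≠ 0 → c ≤ x := by
    refine A.finite_real_spectrum.eventually_all.2 fun x hx ↦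
      Filter.eventually_imp_distrib_left.2 fun hx0 ↦ ?_
    have hpos : 0 < x := (spectrum_nonneg_of_nonneg hA.nonneg hx).lt_of_ne' hx0
    exact nhdsWithin_le_nhds (Iic_mem_nhds hpos)
  obtain ⟨c, hc, hc0⟩ := (hev.and self_mem_nhdsWithin).exists
  refine ⟨c, hc0, ?_⟩
  rw [supportProj, ← cfc_const_mul _ _ _ (continuousOn_real_spectrum A _)]
  conv_rhs => rw [← cfc_id' ℝ A]
  refine cfc_mono (fun x hx ↦ ?_) (continuousOn_real_spectrum A _) (continuousOn_real_spectrum A _)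
  by_cases hx0 : x = 0
  · simp [hx0]
  · simpa [hx0] using hc x hx hx0

end Support

section LoewnerOrder

open scoped MatrixOrder

lemma exists_pos_le_smul_one_of_isHermitian {n 𝕜 : Type*} [Finite n] [DecidableEq n] [RCLike 𝕜]
    {A : Matrix n n 𝕜} (hA : A.IsHermitian) :
    ∃ t : ℝ, 0 < t ∧ A ≤ t • 1 := by
  cases nonempty_fintype n
  have hA' : IsSelfAdjoint A := hA
  obtain ⟨t, ht⟩ := A.finite_real_spectrum.bddAbove
  refine ⟨max t 1, by positivity, ?_⟩
  rw [← Algebra.algebraMap_eq_smul_one]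
  exact le_algebraMap_of_spectrum_le fun x hx ↦ (ht hx).trans (le_max_left t 1)

lemma exists_pos_smul_le_of_ker_mulVecLin_le {n 𝕜 : Type*} [Fintype n] [RCLike 𝕜]
    {A B : Matrix n n 𝕜} (hA : A.PosSemidef) (hB : B.IsHermitian)
    (hker : LinearMap.ker A.mulVecLin ≤ LinearMap.ker B.mulVecLin) :
    ∃ c : ℝ, 0 < c ∧ c • B ≤ A := by
  classical
  obtain ⟨c, hc, hcA⟩ := exists_pos_smul_supportProj_le hA
  obtain ⟨t, ht, hBt⟩ := exists_pos_le_smul_one_of_isHermitian hB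
  have hP := isStarProjection_supportProj A
  have hBP : B ≤ t • supportProj A :=
    calc B = supportProj A * B * supportProj A :=
          ((supportProj_mul_mul_supportProj_eq_self_iff hA.isHermitian hB).2 hker).symm
      _ ≤ supportProj A * (t • 1) * supportProj A := hP.isSelfAdjoint.conjugate_le_conjugate hBt
      _ = t • supportProj A := by
          rw [mul_smul_comm, mul_one, smul_mul_assoc, hP.isIdempotentElem.eq]
  refine ⟨c / t, by positivity, ?_⟩
  calc (c / t) • B ≤ (c / t) • t • supportProj A := smul_le_smul_of_nonneg_left hBP (by positivity)
    _ = c • supportProj A := by rw [smul_smul, div_mul_cancel₀ c ht.ne']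
    _ ≤ A := hcA

end LoewnerOrder

lemma IsFaceOf.inter_preimage {E E' : Type*} [AddCommGroup E] [Module ℝ E] [AddCommGroup E']
    [Module ℝ E'] {C : Set E} {f : E →ᵃ[ℝ] E'} {F : Set E'} (hF : IsFaceOf (f '' C) F)
    (hC : Convex ℝ C) : IsFaceOf C (C ∩ f ⁻¹' F) := by
  refine ⟨hC.inter (hF.1.affine_preimage f), Set.inter_subset_left, ?_⟩
  rintro x hx y hy z ⟨-, hzF⟩ hz
  have hfz : f z ∈ openSegment ℝ (f x) (f y) :=
    image_openSegment ℝ f x y ▸ Set.mem_image_of_mem f hz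
  exact ⟨hx, hF.2.left_mem_of_mem_openSegment ⟨x, hx, rfl⟩ ⟨y, hy, rfl⟩ hzF hfz⟩

section Density

open scoped MatrixOrder

variable {n : Type*} [Fintype n]

lemma convex_setOf_isDensity : Convex ℝ {ρ : Matrix n n ℂ | IsDensity ρ} := by
  rintro ρ ⟨hρ, hρtr⟩ σ ⟨hσ, hσtr⟩ a b ha hb hab
  refine ⟨(hρ.smul ha).add (hσ.smul hb), ?_⟩
  rw [trace_add, trace_smul, trace_smul, hρtr, hσtr, ← add_smul, hab, one_smul]

lemma isDensity_inv_trace_smul {A : Matrix n n ℂ} (hA : A.PosSemidef) (hA0 : A ≠ 0) :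
    IsDensity (A.trace⁻¹ • A) := by
  refine ⟨hA.smul (inv_nonneg.2 hA.trace_nonneg), ?_⟩
  rw [trace_smul, smul_eq_mul, inv_mul_cancel₀ (hA.trace_eq_zero_iff.not.2 hA0)]

lemma IsDensity.ne_zero {ρ : Matrix n n ℂ} (hρ : IsDensity ρ) : ρ ≠ 0 := by
  rintro rfl
  simpa using hρ.2

lemma IsDensity.exists_mem_openSegment {ρ σ : Matrix n n ℂ} (hρ : IsDensity ρ) (hσ : IsDensity σ)
    (hker : LinearMap.ker ρ.mulVecLin ≤ LinearMap.ker σ.mulVecLin) :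
    ∃ τ, IsDensity τ ∧ ρ ∈ openSegment ℝ σ τ := by
  obtain ⟨c, hc, hle⟩ := exists_pos_smul_le_of_ker_mulVecLin_le hρ.1 hσ.1.isHermitian hker
  refine ⟨ρ + c • (ρ - σ), ⟨?_, ?_⟩, c / (1 + c), 1 / (1 + c), by positivity, by positivity,
    by rw [← add_div, add_comm, div_self (by positivity)], ?_⟩
  · have hsum : ρ + c • (ρ - σ) = c • ρ + (ρ - c • σ) := by module
    rw [hsum]
    exact (hρ.1.smul hc.le).add hle
  · rw [trace_add, trace_smul, trace_sub, hρ.2, hσ.2, sub_self, smul_zero, add_zero]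
  · match_scalars <;> field_simp
    ring

lemma IsFaceOf.mem_of_ker_mulVecLin_le {G : Set (Matrix n n ℂ)}
    (hG : IsFaceOf {ρ | IsDensity ρ} G) {ρ σ : Matrix n n ℂ} (hρ : ρ ∈ G) (hσ : IsDensity σ)
    (hker : LinearMap.ker ρ.mulVecLin ≤ LinearMap.ker σ.mulVecLin) : σ ∈ G := by
  obtain ⟨τ, hτ, hρτ⟩ := (hG.2.subset hρ).exists_mem_openSegment hσ hker
  exact hG.2.left_mem_of_mem_openSegment hσ hτ hρ hρτ

lemma IsFaceOf.exists_mem_iff_ker_mulVecLin_le {G : Set (Matrix n n ℂ)}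
    (hG : IsFaceOf {ρ | IsDensity ρ} G) (hne : G.Nonempty) :
    ∃ ρ, IsDensity ρ ∧ ∀ σ, IsDensity σ →
      (σ ∈ G ↔ LinearMap.ker ρ.mulVecLin ≤ LinearMap.ker σ.mulVecLin) := by
  obtain ⟨ρ, hρ, hmin⟩ :=
    exists_mem_forall_ker_mulVecLin_le_of_convex hG.1 (fun σ hσ ↦ (hG.2.subset hσ).1) hne
  exact ⟨ρ, hG.2.subset hρ, fun σ hσ ↦ ⟨hmin σ, hG.mem_of_ker_mulVecLin_le hρ hσ⟩⟩

lemma IsFaceOf.exists_isStarProjection {G : Set (Matrix n n ℂ)}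
    (hG : IsFaceOf {ρ | IsDensity ρ} G) (hne : G.Nonempty) :
    ∃ P, IsStarProjection P ∧ P ≠ 0 ∧ ∀ ρ, IsDensity ρ → (ρ ∈ G ↔ P * ρ * P = ρ) := by
  classical
  obtain ⟨ρ₀, hρ₀, hmem⟩ := hG.exists_mem_iff_ker_mulVecLin_le hne
  have hherm := hρ₀.1.isHermitian
  refine ⟨supportProj ρ₀, isStarProjection_supportProj ρ₀, fun h0 ↦ hρ₀.ne_zero ?_, fun ρ hρ ↦ ?_⟩
  · rw [← mul_supportProj hherm, h0, mul_zero]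
  · rw [hmem ρ hρ, supportProj_mul_mul_supportProj_eq_self_iff hherm hρ.1.isHermitian]

lemma isStarProjection_le_of_forall_isDensity {P Q : Matrix n n ℂ} (hP : IsStarProjection P)
    (hQ : IsStarProjection Q) (h : ∀ ρ, IsDensity ρ → P * ρ * P = ρ → Q * ρ * Q = ρ) :
    P ≤ Q := by
  rcases eq_or_ne P 0 with rfl | hP0
  · exact hQ.nonneg
  have hpos : P.PosSemidef := hP.nonneg.posSemidef
  have htr : P.trace⁻¹ ≠ 0 := inv_ne_zero (hpos.trace_eq_zero_iff.not.2 hP0)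
  have hPP : P * (P.trace⁻¹ • P) * P = P.trace⁻¹ • P := by
    rw [mul_smul_comm, smul_mul_assoc, hP.isIdempotentElem.eq, hP.isIdempotentElem.eq]
  have hQPQ : Q * P * Q = P := by
    have := h _ (isDensity_inv_trace_smul hpos hP0) hPP
    rw [mul_smul_comm, smul_mul_assoc] at this
    exact smul_right_injective _ htr this
  refine hP.le_of_mul_eq_right hQ ?_
  rw [← hQPQ, ← mul_assoc, ← mul_assoc, hQ.isIdempotentElem.eq]

lemma isStarProjection_eq_of_forall_isDensity {P Q : Matrix n n ℂ} (hP : IsStarProjection P)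
    (hQ : IsStarProjection Q) (h : ∀ ρ, IsDensity ρ → (P * ρ * P = ρ ↔ Q * ρ * Q = ρ)) :
    P = Q :=
  le_antisymm (isStarProjection_le_of_forall_isDensity hP hQ fun ρ hρ ↦ (h ρ hρ).1)
    (isStarProjection_le_of_forall_isDensity hQ hP fun ρ hρ ↦ (h ρ hρ).2)

end Density

theorem stmt16_general {n E : Type*} [Fintype n] [AddCommGroup E] [Module ℝ E]
    (w : Matrix n n ℂ →ᵃ[ℝ] E) (F : Set E) (hF : IsFaceOf (w '' {ρ | IsDensity ρ}) F)
    (hFne : F.Nonempty) :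
    ∃! P : Matrix n n ℂ, Pᴴ = P ∧ P * P = P ∧ P ≠ 0 ∧
      ∀ ρ : Matrix n n ℂ, IsDensity ρ → (w ρ ∈ F ↔ P * ρ * P = ρ) := by
  have hG := hF.inter_preimage convex_setOf_isDensity
  have hne : ({ρ | IsDensity ρ} ∩ w ⁻¹' F).Nonempty := by
    obtain ⟨x, hx⟩ := hFne
    obtain ⟨ρ, hρ, rfl⟩ := hF.2.subset hx
    exact ⟨ρ, hρ, hx⟩
  obtain ⟨P, hP, hP0, hmem⟩ := hG.exists_isStarProjection hne
  have hPF : ∀ ρ, IsDensity ρ → (w ρ ∈ F ↔ P * ρ * P = ρ) := fun ρ hρ ↦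
    (and_iff_right hρ).symm.trans (hmem ρ hρ)
  refine ⟨P, ⟨hP.isSelfAdjoint, hP.isIdempotentElem, hP0, hPF⟩, ?_⟩
  rintro Q ⟨hQH, hQQ, -, hQF⟩
  exact isStarProjection_eq_of_forall_isDensity ⟨hQQ, hQH⟩ hP fun ρ hρ ↦
    (hQF ρ hρ).symm.trans (hPF ρ hρ)

/-- `wpt A` as a real-linear map. -/
def wptLinearMap {n : Type*} [Fintype n] {k : ℕ} (A : Fin k → Matrix n n ℂ) :
    Matrix n n ℂ →ₗ[ℝ] (Fin k → ℝ) where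
  toFun := wpt A
  map_add' ρ σ := by ext i; simp [wpt, add_mul]
  map_smul' c ρ := by ext i; simp [wpt]

/-- every nonempty face of the joint numerical range has a unique
associated nonzero orthogonal projection. -/
theorem stmt16 {n k : ℕ} (A : Fin k → Matrix (Fin n) (Fin n) ℂ)
    (hA : ∀ i, (A i).IsHermitian)
    (F : Set (Fin k → ℝ)) (hF : IsFaceOf (JNR A) F) (hFne : F.Nonempty) :
    ∃! P : Matrix (Fin n) (Fin n) ℂ, Pᴴ = P ∧ P * P = P ∧ P ≠ 0 ∧
      ∀ ρ : Matrix (Fin n) (Fin n) ℂ, IsDensity ρ →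
        (wpt A ρ ∈ F ↔ P * ρ * P = ρ) := by
  exact stmt16_general (wptLinearMap A).toAffineMap F hF hFne
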